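/- Fix p ∈ [1,∞], D, E, N ∈ ℕ₊ and S, I, M > 0. For every Γ > 0 there exists a finite subset F̄ ⊆ F^D_{N,M} of cardinality at most (160 M N D^{1/p}/Γ + 1)^{4D(D+E+2)N + D} such that for every f ∈ F^D_{N,M} there is an f̄ ∈ F̄ with sup_{(s,u)∈B̄_{S,I}} ‖f(s,u) − f̄(s,u)‖_p ≤ Γ (where D^{1/p} := 1 when p = ∞). -/

import Mathlib

/-!
The networks in `F^D_{N,M}` are the image of the closed unit ball of a finite-dimensional normed
space of parameters. The input weights `b`, `c` are read as elements of the duals of `ℓ^p(ℝ^D)` and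
`ℓ^p(ℝ^E)`, whose operator norms are `1/S` and `1/I` times the seminorms `normOn`; after rescaling
every parameter by its bound and taking the supremum of all the norms, the constraints defining the
family say exactly that the parameter has norm at most one (`memFD_realize`,
`exists_eq_realize`). This space has dimension `D (4N (D + E + 2) + 1)` (`finrank_Param`).

The volume argument (`exists_cover`) covers the unit ball of a `k`-dimensional space by at most
`(2 / r + 1) ^ k` balls of radius `r` centred inside it. On `B̄_S × B̄_I` each coordinate of a network
is `80 M N`-Lipschitz in the parameter over the unit ball (`abs_netFn_sub_le`), and a coordinatewise
error `η` costs at most `D^{1/p} η` in `p`-norm (`pnorm_le_of_abs_le`), so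
`r = Γ / (80 M N D^{1/p})` gives the theorem.
-/

open MeasureTheory
open scoped ENNReal

/-- The `p`-norm on `ℝ^D`, for `p ∈ [1,∞]` (sup-norm when `p = ∞`). -/
noncomputable def pnorm (p : ℝ≥0∞) {D : ℕ} (x : Fin D → ℝ) : ℝ :=
  if p = ⊤ then ⨆ i, |x i| else (∑ i, |x i| ^ p.toReal) ^ (1 / p.toReal)

/-- `D^{1/p}`, with the convention `D^{1/∞} = 1`. -/
noncomputable def dpow (p : ℝ≥0∞) (D : ℕ) : ℝ :=
  if p = ⊤ then 1 else (D : ℝ) ^ (1 / p.toReal)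

/-- Dot product on `ℝ^Q`. -/
noncomputable def dotp {Q : ℕ} (ω x : Fin Q → ℝ) : ℝ := ∑ i, ω i * x i

/-- The seminorm `‖ω‖_B = sup_{x ∈ B} |ω·x|`. -/
noncomputable def normOn {Q : ℕ} (B : Set (Fin Q → ℝ)) (ω : Fin Q → ℝ) : ℝ :=
  ⨆ x ∈ B, |dotp ω x|

/-- Membership in the family `F¹_{N,M}` of real-valued bounded-parameter ReLU FNNs. -/
def memF1 (p : ℝ≥0∞) (D E N : ℕ) (M S I : ℝ)
    (f : (Fin D → ℝ) → (Fin E → ℝ) → ℝ) : Prop :=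
  ∃ (a : Fin (4 * N) → ℝ) (b : Fin (4 * N) → Fin D → ℝ)
    (c : Fin (4 * N) → Fin E → ℝ) (d : Fin (4 * N) → ℝ) (e : ℝ),
    (∀ n, |a n| ≤ 2 * Real.sqrt M) ∧
    (∀ n, normOn {x : Fin D → ℝ | pnorm p x ≤ S} (b n) ≤ Real.sqrt M) ∧
    (∀ n, normOn {u : Fin E → ℝ | pnorm p u ≤ I} (c n) ≤ Real.sqrt M) ∧
    (∀ n, |d n| ≤ 2 * Real.sqrt M) ∧
    |e| ≤ M ∧
    ∀ s u, f s u = (∑ n, a n * max 0 (dotp (b n) s + dotp (c n) u + d n)) + e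

/-- Membership in the family `F^D_{N,M}` of vector-valued bounded-parameter ReLU FNNs. -/
def memFD (p : ℝ≥0∞) (D E N : ℕ) (M S I : ℝ)
    (f : (Fin D → ℝ) → (Fin E → ℝ) → (Fin D → ℝ)) : Prop :=
  ∀ d : Fin D, memF1 p D E N M S I (fun s u => f s u d)

/-! ### Covering the unit ball -/

/-- Volume bound: an `r`-separated subset of the unit ball of a `k`-dimensional normed space has at
most `(2 / r + 1) ^ k` points, because the balls of radius `r / 2` around them are disjoint and
contained in the ball of radius `1 + r / 2`. -/
theorem card_le_of_separated_unitBall {V : Type*} [NormedAddCommGroup V] [NormedSpace ℝ V]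
    [FiniteDimensional ℝ V] {r : ℝ} (hr : 0 < r) (s : Finset V) (hs : ∀ c ∈ s, ‖c‖ ≤ 1)
    (h : ∀ c ∈ s, ∀ d ∈ s, c ≠ d → r ≤ ‖c - d‖) :
    (s.card : ℝ) ≤ (2 / r + 1) ^ Module.finrank ℝ V := by
  borelize V
  let μ : Measure V := Measure.addHaar
  have hr2 : 0 < r / 2 := by positivity
  have hρ : 0 < 1 + r / 2 := by positivity
  have hdisj : Set.Pairwise (s : Set V)
      (Function.onFun Disjoint fun c => Metric.ball (c : V) (r / 2)) := by
    rintro c hc d hd hcd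
    apply Metric.ball_disjoint_ball
    rw [dist_eq_norm, add_halves]
    exact h c hc d hd hcd
  have hsub : (⋃ c ∈ s, Metric.ball (c : V) (r / 2)) ⊆ Metric.ball (0 : V) (1 + r / 2) := by
    refine Set.iUnion₂_subset fun x hx => Metric.ball_subset_ball' ?_
    rw [dist_zero_right]
    linarith [hs x hx]
  have hvol : (s.card : ℝ≥0∞) * ENNReal.ofReal ((r / 2) ^ Module.finrank ℝ V) *
        μ (Metric.ball 0 1) ≤
      ENNReal.ofReal ((1 + r / 2) ^ Module.finrank ℝ V) * μ (Metric.ball 0 1) :=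
    calc
      _ = μ (⋃ c ∈ s, Metric.ball (c : V) (r / 2)) := by
        rw [measure_biUnion_finset hdisj fun c _ => measurableSet_ball]
        simp only [μ.addHaar_ball_of_pos _ hr2, Finset.sum_const, nsmul_eq_mul, mul_assoc]
      _ ≤ μ (Metric.ball (0 : V) (1 + r / 2)) := measure_mono hsub
      _ = _ := by simp only [μ.addHaar_ball_of_pos _ hρ]
  have hcard : (s.card : ℝ≥0∞) * ENNReal.ofReal ((r / 2) ^ Module.finrank ℝ V) ≤
      ENNReal.ofReal ((1 + r / 2) ^ Module.finrank ℝ V) :=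
    (ENNReal.mul_le_mul_iff_left (Metric.measure_ball_pos _ _ zero_lt_one).ne'
      measure_ball_lt_top.ne).1 hvol
  have hreal := ENNReal.toReal_le_of_le_ofReal (pow_nonneg hρ.le _) hcard
  rw [ENNReal.toReal_mul, ENNReal.toReal_natCast, ENNReal.toReal_ofReal (by positivity),
    ← le_div_iff₀ (by positivity), ← div_pow] at hreal
  have hbase : (1 + r / 2) / (r / 2) = 2 / r + 1 := by
    field_simp
  rwa [hbase] at hreal

/-- A maximal `r`-separated subset of the unit ball is an `r`-cover of it. -/
theorem exists_cover (V : Type*) [NormedAddCommGroup V] [NormedSpace ℝ V]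
    [FiniteDimensional ℝ V] {r : ℝ} (hr : 0 < r) :
    ∃ s : Finset V, (∀ c ∈ s, ‖c‖ ≤ 1) ∧ (s.card : ℝ) ≤ (2 / r + 1) ^ Module.finrank ℝ V ∧
      ∀ x : V, ‖x‖ ≤ 1 → ∃ c ∈ s, ‖x - c‖ ≤ r := by
  classical
  let P : Finset V → Prop := fun s =>
    (∀ c ∈ s, ‖c‖ ≤ 1) ∧ ∀ c ∈ s, ∀ d ∈ s, c ≠ d → r ≤ ‖c - d‖
  have hbdd : BddAbove {n : ℕ | ∃ s, P s ∧ s.card = n} := by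
    refine ⟨⌊(2 / r + 1) ^ Module.finrank ℝ V⌋₊, ?_⟩
    rintro n ⟨s, hs, rfl⟩
    exact Nat.le_floor (card_le_of_separated_unitBall hr s hs.1 hs.2)
  have hne : {n : ℕ | ∃ s, P s ∧ s.card = n}.Nonempty := ⟨0, ∅, by simp [P], by simp⟩
  obtain ⟨s, hs, hmax⟩ := Nat.sSup_mem hne hbdd
  refine ⟨s, hs.1, card_le_of_separated_unitBall hr s hs.1 hs.2, fun x hx => ?_⟩
  by_contra! hfar
  have hxs : x ∉ s := fun h => by simpa using hr.trans (hfar x h)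
  have hP : P (insert x s) := by
    refine ⟨by simpa using ⟨hx, hs.1⟩, fun c hc d hd hcd => ?_⟩
    rcases Finset.mem_insert.1 hc with hcx | hc <;> rcases Finset.mem_insert.1 hd with hdx | hd
    · exact absurd (hcx.trans hdx.symm) hcd
    · rw [hcx]
      exact (hfar d hd).le
    · rw [hdx, norm_sub_rev]
      exact (hfar c hc).le
    · exact hs.2 c hc d hd hcd
  have hle := le_csSup hbdd ⟨_, hP, rfl⟩
  rw [Finset.card_insert_of_notMem hxs] at hle
  omega

/-! ### The `p`-norm -/

theorem pnorm_eq_norm (p : ℝ≥0∞) [hp : Fact (1 ≤ p)] {Q : ℕ} (x : Fin Q → ℝ) :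
    pnorm p x = ‖WithLp.toLp p x‖ := by
  unfold pnorm
  split_ifs with h
  · subst h
    rw [PiLp.norm_eq_ciSup]
    simp
  · rw [PiLp.norm_eq_sum (p.toReal_pos_iff_ne_top.mpr h)]
    simp

theorem dpow_pos (p : ℝ≥0∞) {D : ℕ} (hD : 0 < D) : 0 < dpow p D := by
  unfold dpow
  split_ifs
  · exact one_pos
  · exact Real.rpow_pos_of_pos (by exact_mod_cast hD) _

theorem pnorm_le_of_abs_le (p : ℝ≥0∞) (hp : 1 ≤ p) {D : ℕ} (hD : 0 < D) {η : ℝ} (hη : 0 ≤ η)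
    (x : Fin D → ℝ) (hx : ∀ i, |x i| ≤ η) : pnorm p x ≤ dpow p D * η := by
  have : Nonempty (Fin D) := ⟨⟨0, hD⟩⟩
  unfold pnorm dpow
  split_ifs with h
  · rw [one_mul]
    exact ciSup_le hx
  · have hq : 0 < p.toReal := ENNReal.toReal_pos (one_pos.trans_le hp).ne' h
    calc (∑ i, |x i| ^ p.toReal) ^ (1 / p.toReal)
        ≤ (∑ _i : Fin D, η ^ p.toReal) ^ (1 / p.toReal) := by
          gcongr with i
          exact hx i
      _ = (D : ℝ) ^ (1 / p.toReal) * η := by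
          rw [Finset.sum_const, Finset.card_univ, Fintype.card_fin, nsmul_eq_mul,
            Real.mul_rpow (by positivity) (by positivity), ← Real.rpow_mul hη,
            mul_one_div_cancel hq.ne', Real.rpow_one]

/-! ### Weight vectors as functionals -/

/-- The dual of `ℝ^Q` with the `p`-norm, carrying the operator norm. -/
abbrev LpDual (p : ℝ≥0∞) [Fact (1 ≤ p)] (Q : ℕ) : Type :=
  StrongDual ℝ (PiLp p (fun _ : Fin Q => ℝ))

section
variable {p : ℝ≥0∞} [Fact (1 ≤ p)] {Q : ℕ}

/-- The functional `x ↦ ω · x`. -/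
noncomputable def toDual (p : ℝ≥0∞) [Fact (1 ≤ p)] {Q : ℕ} (ω : Fin Q → ℝ) : LpDual p Q :=
  LinearMap.toContinuousLinearMap
    ((∑ i, ω i • (LinearMap.proj i : (Fin Q → ℝ) →ₗ[ℝ] ℝ)) ∘ₗ
      (WithLp.linearEquiv p ℝ (Fin Q → ℝ)).toLinearMap)

theorem toDual_apply (ω x : Fin Q → ℝ) : toDual p ω (WithLp.toLp p x) = dotp ω x := by
  simp [toDual, dotp]

/-- The weight vector representing a functional. -/
noncomputable def ofDual (φ : LpDual p Q) : Fin Q → ℝ :=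
  fun i => φ (WithLp.toLp p (Pi.single i 1))

theorem dotp_ofDual (φ : LpDual p Q) (x : Fin Q → ℝ) :
    dotp (ofDual φ) x = φ (WithLp.toLp p x) := by
  have hx : WithLp.toLp p x = ∑ i, x i • WithLp.toLp p (Pi.single i (1 : ℝ)) := by
    ext j
    simp [Pi.single_apply]
  rw [hx, map_sum]
  simp [dotp, ofDual, mul_comm]

theorem dotp_smul (k : ℝ) (ω x : Fin Q → ℝ) : dotp (k • ω) x = k * dotp ω x := by
  simp [dotp, Finset.mul_sum, mul_assoc]

theorem abs_apply_le (φ : LpDual p Q) {R : ℝ} {x : Fin Q → ℝ} (hx : pnorm p x ≤ R) :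
    |φ (WithLp.toLp p x)| ≤ ‖φ‖ * R := by
  rw [pnorm_eq_norm] at hx
  rw [← Real.norm_eq_abs]
  exact (φ.le_opNorm _).trans (by gcongr)

omit [Fact (1 ≤ p)] in
theorem normOn_le {R K : ℝ} (hK : 0 ≤ K) (ω : Fin Q → ℝ)
    (h : ∀ x, pnorm p x ≤ R → |dotp ω x| ≤ K) :
    normOn {x : Fin Q → ℝ | pnorm p x ≤ R} ω ≤ K :=
  Real.iSup_le (fun x => Real.iSup_le (fun hx => h x hx) hK) hK

/-- The operator norm is controlled by `normOn`; the real supremum in `normOn` is a genuine one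
since the functional is bounded on the ball. -/
theorem norm_toDual_le {R K : ℝ} (hR : 0 < R) (ω : Fin Q → ℝ)
    (h : normOn {x : Fin Q → ℝ | pnorm p x ≤ R} ω ≤ K) : ‖toDual p ω‖ ≤ K / R := by
  refine ContinuousLinearMap.opNorm_bound_of_ball_bound hR K _ fun z hz => ?_
  have hz' : pnorm p z.ofLp ≤ R := by
    rw [pnorm_eq_norm]
    simpa using hz
  have hval : ‖toDual p ω z‖ = |dotp ω z.ofLp| := by
    rw [← toDual_apply (p := p), WithLp.toLp_ofLp, Real.norm_eq_abs]
  rw [hval]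
  refine le_trans ?_ h
  have hbdd : BddAbove (Set.range fun x : Fin Q → ℝ =>
      ⨆ _ : x ∈ {x : Fin Q → ℝ | pnorm p x ≤ R}, |dotp ω x|) := by
    refine ⟨‖toDual p ω‖ * R, ?_⟩
    rintro _ ⟨x, rfl⟩
    refine Real.iSup_le (fun hx => ?_) (by positivity)
    rw [← toDual_apply (p := p)]
    exact abs_apply_le _ hx
  refine le_ciSup_of_le hbdd z.ofLp ?_
  rw [ciSup_pos (show z.ofLp ∈ {x : Fin Q → ℝ | pnorm p x ≤ R} from hz')]

end

/-! ### The normalized parameter space -/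

/-- Rescaled parameters of one scalar network: `(((α, φ), (ψ, δ))ₙ, ε)` stands for the output
weights `2√M α`, the input weights `(√M / S) φ` and `(√M / I) ψ`, the biases `2√M δ` and the
output bias `M ε`. The norm is the supremum of the norms of all the entries. -/
abbrev ScalarParam (p : ℝ≥0∞) [Fact (1 ≤ p)] (D E N : ℕ) : Type :=
  (Fin (4 * N) → (ℝ × LpDual p D) × (LpDual p E × ℝ)) × ℝ

/-- Rescaled parameters of a vector-valued network, one scalar network per coordinate. -/
abbrev Param (p : ℝ≥0∞) [Fact (1 ≤ p)] (D E N : ℕ) : Type :=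
  Fin D → ScalarParam p D E N

section
variable {p : ℝ≥0∞} [Fact (1 ≤ p)] {D E N : ℕ} {M S I : ℝ}

instance finite_LpDual (Q : ℕ) : Module.Finite ℝ (LpDual p Q) :=
  Module.Finite.equiv (LinearMap.toContinuousLinearMap
    (𝕜 := ℝ) (E := PiLp p (fun _ : Fin Q => ℝ)) (F' := ℝ))

instance free_neuron : Module.Free ℝ ((ℝ × LpDual p D) × (LpDual p E × ℝ)) :=
  Module.Free.of_divisionRing ℝ _

instance free_LpDual (Q : ℕ) : Module.Free ℝ (LpDual p Q) :=
  Module.Free.of_divisionRing ℝ _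

instance finite_ScalarParam : Module.Finite ℝ (ScalarParam p D E N) := inferInstance

theorem finrank_LpDual (Q : ℕ) : Module.finrank ℝ (LpDual p Q) = Q := by
  rw [← (LinearMap.toContinuousLinearMap
      (𝕜 := ℝ) (E := PiLp p (fun _ : Fin Q => ℝ)) (F' := ℝ)).finrank_eq,
    Subspace.dual_finrank_eq, (WithLp.linearEquiv p ℝ (Fin Q → ℝ)).finrank_eq]
  simp

theorem finrank_Param :
    Module.finrank ℝ (Param p D E N) = 4 * D * (D + E + 2) * N + D := by
  have hscalar : Module.finrank ℝ (ScalarParam p D E N) = 4 * N * ((1 + D) + (E + 1)) + 1 := by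
    rw [Module.finrank_prod, Module.finrank_pi_fintype]
    simp only [Module.finrank_prod, finrank_LpDual, Module.finrank_self, Finset.sum_const,
      Finset.card_univ, Fintype.card_fin, smul_eq_mul]
  rw [Module.finrank_pi_fintype]
  simp only [hscalar, Finset.sum_const, Finset.card_univ, Fintype.card_fin, smul_eq_mul]
  ring

/-- The argument of the ReLU in a hidden neuron. -/
noncomputable def preact (M S I : ℝ) (w : (ℝ × LpDual p D) × (LpDual p E × ℝ))
    (s : Fin D → ℝ) (u : Fin E → ℝ) : ℝ :=
  √M / S * w.1.2 (WithLp.toLp p s) + √M / I * w.2.1 (WithLp.toLp p u) + 2 * √M * w.2.2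

/-- The scalar network with the given rescaled parameters. -/
noncomputable def netFn (M S I : ℝ) (θ : ScalarParam p D E N)
    (s : Fin D → ℝ) (u : Fin E → ℝ) : ℝ :=
  (∑ n, 2 * √M * (θ.1 n).1.1 * max 0 (preact M S I (θ.1 n) s u)) + M * θ.2

/-- The vector-valued network with the given rescaled parameters. -/
noncomputable def realize (M S I : ℝ) (θ : Param p D E N)
    (s : Fin D → ℝ) (u : Fin E → ℝ) : Fin D → ℝ :=
  fun d => netFn M S I (θ d) s u

theorem neuron_norm_le_iff (w : (ℝ × LpDual p D) × (LpDual p E × ℝ)) (r : ℝ) :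
    ‖w‖ ≤ r ↔ (|w.1.1| ≤ r ∧ ‖w.1.2‖ ≤ r) ∧ (‖w.2.1‖ ≤ r ∧ |w.2.2| ≤ r) := by
  simp only [Prod.norm_def, sup_le_iff, Real.norm_eq_abs]

theorem scalarParam_norm_le_iff {r : ℝ} (hr : 0 ≤ r) (θ : ScalarParam p D E N) :
    ‖θ‖ ≤ r ↔ (∀ n, ‖θ.1 n‖ ≤ r) ∧ |θ.2| ≤ r := by
  rw [Prod.norm_def, sup_le_iff, pi_norm_le_iff_of_nonneg hr, Real.norm_eq_abs]

theorem memF1_netFn (hS : 0 < S) (hI : 0 < I) (hM : 0 < M) (θ : ScalarParam p D E N)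
    (hθ : ‖θ‖ ≤ 1) : memF1 p D E N M S I (netFn M S I θ) := by
  obtain ⟨hw, he⟩ := (scalarParam_norm_le_iff zero_le_one θ).1 hθ
  have hw' := fun n => (neuron_norm_le_iff (θ.1 n) 1).1 (hw n)
  have hdual : ∀ {Q : ℕ} {R : ℝ} (φ : LpDual p Q), 0 < R → ‖φ‖ ≤ 1 →
      normOn {x : Fin Q → ℝ | pnorm p x ≤ R} ((√M / R) • ofDual φ) ≤ √M := by
    intro Q R φ hR hφ
    refine normOn_le (by positivity) _ fun x hx => ?_
    have hφx : |φ (WithLp.toLp p x)| ≤ R :=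
      (abs_apply_le φ hx).trans (mul_le_of_le_one_left hR.le hφ)
    rw [dotp_smul, dotp_ofDual, abs_mul, abs_of_nonneg (by positivity)]
    calc √M / R * |φ (WithLp.toLp p x)| ≤ √M / R * R := by gcongr
      _ = √M := by field_simp
  have hscal : ∀ {k x : ℝ}, 0 ≤ k → |x| ≤ 1 → |k * x| ≤ k := by
    intro k x hk hx
    rw [abs_mul, abs_of_nonneg hk]
    exact mul_le_of_le_one_right hk hx
  refine ⟨fun n => 2 * √M * (θ.1 n).1.1, fun n => (√M / S) • ofDual (θ.1 n).1.2,
    fun n => (√M / I) • ofDual (θ.1 n).2.1, fun n => 2 * √M * (θ.1 n).2.2, M * θ.2,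
    fun n => hscal (by positivity) (hw' n).1.1, fun n => hdual _ hS (hw' n).1.2,
    fun n => hdual _ hI (hw' n).2.1, fun n => hscal (by positivity) (hw' n).2.2,
    hscal hM.le he, fun s u => ?_⟩
  simp only [netFn, preact, dotp_smul, dotp_ofDual]

theorem memFD_realize (hS : 0 < S) (hI : 0 < I) (hM : 0 < M) (θ : Param p D E N)
    (hθ : ‖θ‖ ≤ 1) : memFD p D E N M S I (realize M S I θ) :=
  fun d => memF1_netFn hS hI hM (θ d) ((norm_le_pi_norm θ d).trans hθ)

theorem exists_eq_netFn (hS : 0 < S) (hI : 0 < I) (hM : 0 < M)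
    {f : (Fin D → ℝ) → (Fin E → ℝ) → ℝ} (hf : memF1 p D E N M S I f) :
    ∃ θ : ScalarParam p D E N, ‖θ‖ ≤ 1 ∧ ∀ s u, f s u = netFn M S I θ s u := by
  obtain ⟨a, b, c, d, e, ha, hb, hc, hd, he, hf⟩ := hf
  have hsM : 0 < √M := Real.sqrt_pos.2 hM
  have hdual : ∀ {Q : ℕ} {R : ℝ} (ω : Fin Q → ℝ), 0 < R →
      normOn {x : Fin Q → ℝ | pnorm p x ≤ R} ω ≤ √M → ‖(R / √M) • toDual p ω‖ ≤ 1 := by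
    intro Q R ω hR hω
    rw [norm_smul, Real.norm_of_nonneg (by positivity)]
    calc R / √M * ‖toDual p ω‖ ≤ R / √M * (√M / R) := by
          gcongr
          exact norm_toDual_le hR ω hω
      _ = 1 := by field_simp
  have hscal : ∀ {k x : ℝ}, 0 < k → |x| ≤ k → |x / k| ≤ 1 := by
    intro k x hk hx
    rw [abs_div, abs_of_pos hk]
    exact (div_le_one hk).2 hx
  refine ⟨(fun n => ((a n / (2 * √M), (S / √M) • toDual p (b n)),
    ((I / √M) • toDual p (c n), d n / (2 * √M))), e / M), ?_, fun s u => ?_⟩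
  · rw [scalarParam_norm_le_iff zero_le_one]
    refine ⟨fun n => (neuron_norm_le_iff _ 1).2 ⟨⟨?_, ?_⟩, ?_, ?_⟩, hscal hM he⟩
    · exact hscal (by positivity) (ha n)
    · exact hdual _ hS (hb n)
    · exact hdual _ hI (hc n)
    · exact hscal (by positivity) (hd n)
  · rw [hf]
    simp only [netFn, preact, smul_apply, toDual_apply, smul_eq_mul]
    congr 1
    · refine Finset.sum_congr rfl fun n _ => ?_
      congr 1
      · field_simp
      · congr 1
        field_simp
    · field_simp

theorem exists_eq_realize (hS : 0 < S) (hI : 0 < I) (hM : 0 < M)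
    {f : (Fin D → ℝ) → (Fin E → ℝ) → (Fin D → ℝ)} (hf : memFD p D E N M S I f) :
    ∃ θ : Param p D E N, ‖θ‖ ≤ 1 ∧ f = realize M S I θ := by
  choose θ hθ hfθ using fun d => exists_eq_netFn hS hI hM (hf d)
  refine ⟨θ, (pi_norm_le_iff_of_nonneg zero_le_one).2 hθ, ?_⟩
  funext s u d
  exact hfθ d s u

/-! ### Lipschitz dependence on the parameters -/

theorem abs_preact_le (hS : 0 < S) (hI : 0 < I) {r : ℝ}
    (w : (ℝ × LpDual p D) × (LpDual p E × ℝ)) (hw : ‖w‖ ≤ r)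
    {s : Fin D → ℝ} (hs : pnorm p s ≤ S) {u : Fin E → ℝ} (hu : pnorm p u ≤ I) :
    |preact M S I w s u| ≤ 4 * √M * r := by
  obtain ⟨⟨-, h1⟩, h2, h3⟩ := (neuron_norm_le_iff w r).1 hw
  have hdual : ∀ {Q : ℕ} {R : ℝ} (φ : LpDual p Q) {x : Fin Q → ℝ}, 0 < R → ‖φ‖ ≤ r →
      pnorm p x ≤ R → |√M / R * φ (WithLp.toLp p x)| ≤ √M * r := by
    intro Q R φ x hR hφ hx
    rw [abs_mul, abs_of_nonneg (by positivity)]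
    calc √M / R * |φ (WithLp.toLp p x)| ≤ √M / R * (r * R) := by
          gcongr
          exact (abs_apply_le φ hx).trans (by gcongr)
      _ = √M * r := by field_simp
  have h4 : |2 * √M * w.2.2| ≤ 2 * √M * r := by
    rw [abs_mul, abs_of_nonneg (by positivity)]
    gcongr
  calc |preact M S I w s u| ≤ _ := abs_add_three _ _ _
    _ ≤ √M * r + √M * r + 2 * √M * r :=
        add_le_add (add_le_add (hdual _ hS h1 hs) (hdual _ hI h2 hu)) h4
    _ = 4 * √M * r := by ring

theorem preact_sub (w w' : (ℝ × LpDual p D) × (LpDual p E × ℝ))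
    (s : Fin D → ℝ) (u : Fin E → ℝ) :
    preact M S I (w - w') s u = preact M S I w s u - preact M S I w' s u := by
  simp only [preact, Prod.fst_sub, Prod.snd_sub, sub_apply]
  ring

theorem abs_neuron_sub_le (hS : 0 < S) (hI : 0 < I) (hM : 0 < M) {r : ℝ}
    (w w' : (ℝ × LpDual p D) × (LpDual p E × ℝ)) (hw : ‖w‖ ≤ 1) (hw' : ‖w'‖ ≤ 1)
    (h : ‖w - w'‖ ≤ r)
    {s : Fin D → ℝ} (hs : pnorm p s ≤ S) {u : Fin E → ℝ} (hu : pnorm p u ≤ I) :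
    |2 * √M * w.1.1 * max 0 (preact M S I w s u)
      - 2 * √M * w'.1.1 * max 0 (preact M S I w' s u)| ≤ 16 * M * r := by
  have hr : 0 ≤ r := (norm_nonneg _).trans h
  have hα : |w.1.1 - w'.1.1| ≤ r := ((neuron_norm_le_iff _ _).1 h).1.1
  have hα' : |w'.1.1| ≤ 1 := ((neuron_norm_le_iff _ _).1 hw').1.1
  have hrelu : |max 0 (preact M S I w s u)| ≤ 4 * √M := by
    have := abs_max_sub_max_le_abs (preact M S I w s u) 0 0
    simp only [max_self, sub_zero] at this
    rw [max_comm]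
    exact this.trans (by simpa using abs_preact_le hS hI w hw hs hu)
  have hdiff : |max 0 (preact M S I w s u) - max 0 (preact M S I w' s u)| ≤ 4 * √M * r := by
    rw [max_comm 0, max_comm 0]
    refine (abs_max_sub_max_le_abs _ _ _).trans ?_
    rw [← preact_sub]
    exact abs_preact_le hS hI _ h hs hu
  set m := max 0 (preact M S I w s u)
  set m' := max 0 (preact M S I w' s u)
  calc |2 * √M * w.1.1 * m - 2 * √M * w'.1.1 * m'|
      = |2 * √M * ((w.1.1 - w'.1.1) * m + w'.1.1 * (m - m'))| := by
        congr 1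
        ring
    _ = 2 * √M * |(w.1.1 - w'.1.1) * m + w'.1.1 * (m - m')| := by
        rw [abs_mul, abs_of_nonneg (by positivity)]
    _ ≤ 2 * √M * (|w.1.1 - w'.1.1| * |m| + |w'.1.1| * |m - m'|) := by
        rw [← abs_mul, ← abs_mul]
        gcongr
        exact abs_add_le _ _
    _ ≤ 2 * √M * (r * (4 * √M) + 1 * (4 * √M * r)) := by gcongr
    _ = 16 * (√M * √M) * r := by ring
    _ = 16 * M * r := by rw [Real.mul_self_sqrt hM.le]

/-- The `4N` neurons contribute `64 M N r` and the output bias `M r ≤ M N r`, which leaves some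
room below `80 M N r`. -/
theorem abs_netFn_sub_le (hS : 0 < S) (hI : 0 < I) (hM : 0 < M) (hN : 0 < N) {r : ℝ}
    (θ θ' : ScalarParam p D E N) (hθ : ‖θ‖ ≤ 1) (hθ' : ‖θ'‖ ≤ 1) (h : ‖θ - θ'‖ ≤ r)
    {s : Fin D → ℝ} (hs : pnorm p s ≤ S) {u : Fin E → ℝ} (hu : pnorm p u ≤ I) :
    |netFn M S I θ s u - netFn M S I θ' s u| ≤ 80 * M * N * r := by
  have hr : 0 ≤ r := (norm_nonneg _).trans h
  have hθ := (scalarParam_norm_le_iff zero_le_one _).1 hθ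
  have hθ' := (scalarParam_norm_le_iff zero_le_one _).1 hθ'
  have h := (scalarParam_norm_le_iff hr _).1 h
  have hN1 : (1 : ℝ) ≤ N := by exact_mod_cast hN
  unfold netFn
  rw [add_sub_add_comm, ← Finset.sum_sub_distrib, ← mul_sub]
  have hsum := (Finset.abs_sum_le_sum_abs _ Finset.univ).trans
    (Finset.sum_le_sum fun n _ =>
      abs_neuron_sub_le hS hI hM (θ.1 n) (θ'.1 n) (hθ.1 n) (hθ'.1 n) (h.1 n) hs hu)
  have hbias : |M * (θ.2 - θ'.2)| ≤ M * r := by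
    rw [abs_mul, abs_of_pos hM]
    exact mul_le_mul_of_nonneg_left h.2 hM.le
  simp only [Finset.sum_const, Finset.card_univ, Fintype.card_fin, nsmul_eq_mul] at hsum
  push_cast at hsum
  refine (abs_add_le _ _).trans ((add_le_add hsum hbias).trans ?_)
  have hMr : M * r ≤ N * (M * r) := le_mul_of_one_le_left (by positivity) hN1
  have hNMr : 0 ≤ N * (M * r) := by positivity
  linarith

end

/-! ### The covering -/

/-- Existence of a finite `(‖·‖_{B̄_{S,I},p}, Γ)`-covering of `F^D_{N,M}` with the
explicit cardinality bound. -/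
theorem finite_covering_vector_fnn
    (p : ℝ≥0∞) (hp : 1 ≤ p) (D E N : ℕ) (hD : 0 < D) (hE : 0 < E) (hN : 0 < N)
    (S I M : ℝ) (hS : 0 < S) (hI : 0 < I) (hM : 0 < M)
    (Γ : ℝ) (hΓ : 0 < Γ) :
    ∃ Fbar : Finset ((Fin D → ℝ) → (Fin E → ℝ) → (Fin D → ℝ)),
      (∀ fb ∈ Fbar, memFD p D E N M S I fb) ∧
      (Fbar.card : ℝ) ≤
        (160 * M * N * dpow p D / Γ + 1) ^ (4 * D * (D + E + 2) * N + D) ∧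
      ∀ f, memFD p D E N M S I f →
        ∃ fb ∈ Fbar, ∀ s, pnorm p s ≤ S → ∀ u, pnorm p u ≤ I →
          pnorm p (f s u - fb s u) ≤ Γ := by
  classical
  have : Fact (1 ≤ p) := ⟨hp⟩
  have hdp := dpow_pos p hD
  have hN0 : (0 : ℝ) < N := by exact_mod_cast hN
  set r : ℝ := Γ / (80 * M * N * dpow p D) with hr_def
  have hr : 0 < r := by positivity
  obtain ⟨T, hT, hcard, hcover⟩ := exists_cover (Param p D E N) hr
  refine ⟨T.image (realize M S I), ?_, ?_, ?_⟩
  · intro fb hfb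
    obtain ⟨θ, hθ, rfl⟩ := Finset.mem_image.1 hfb
    exact memFD_realize hS hI hM θ (hT θ hθ)
  · have h2r : 160 * M * N * dpow p D / Γ = 2 / r := by
      rw [hr_def]
      field_simp
      norm_num
    rw [h2r, ← finrank_Param (p := p)]
    exact (Nat.cast_le.2 Finset.card_image_le).trans hcard
  · intro f hf
    obtain ⟨θ, hθ, rfl⟩ := exists_eq_realize hS hI hM hf
    obtain ⟨θ', hθ', hclose⟩ := hcover θ hθ
    refine ⟨_, Finset.mem_image_of_mem _ hθ', fun s hs u hu => ?_⟩
    have hcoord : ∀ d, |(realize M S I θ s u - realize M S I θ' s u) d| ≤ 80 * M * N * r :=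
      fun d => abs_netFn_sub_le hS hI hM hN (θ d) (θ' d) ((norm_le_pi_norm θ d).trans hθ)
        ((norm_le_pi_norm θ' d).trans (hT θ' hθ'))
        ((norm_le_pi_norm (θ - θ') d).trans hclose) hs hu
    refine (pnorm_le_of_abs_le p hp hD (by positivity) _ hcoord).trans_eq ?_
    rw [hr_def]
    field_simp
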